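/- arXiv:2001.05785 — 5 statements merged into one kernel-verified Lean document; each statement's English description precedes it below -/
import Mathlib

section
/- Let S be a Polish metric space and let P be an asymptotically stable Markov-Feller operator on S. Then the set of points z ∈ S at which P does not have the e-property in C_b(S) is a meagre subset of S, and the set of points at which P has the e-property in C_b(S) is dense in S. -/
open MeasureTheory ProbabilityTheory Filter Topology

/-- The `n`-step evolution of a measure under the Markov operator generated by the
transition kernel `κ`: `P⁰μ = μ`, `Pⁿ⁺¹μ = (Pⁿμ).bind κ`. -/
noncomputable def kIter {S : Type*} [MeasurableSpace S] (κ : ProbabilityTheory.Kernel S S) :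
    ℕ → Measure S → Measure S
  | 0, μ => μ
  | n + 1, μ => (kIter κ n μ).bind (fun x => κ x)

/-- The `n`-th iterate of the dual operator: `Uⁿf(x) = ∫ f d(Pⁿδₓ)`. -/
noncomputable def kDual {S : Type*} [MeasurableSpace S] (κ : ProbabilityTheory.Kernel S S)
    (n : ℕ) (f : S → ℝ) (x : S) : ℝ :=
  ∫ y, f y ∂(kIter κ n (Measure.dirac x))

/-- A real-valued function is bounded. -/
def IsBddFun {S : Type*} (f : S → ℝ) : Prop := ∃ C : ℝ, ∀ x, |f x| ≤ C

/-- The Feller property: the dual operator maps bounded continuous functions to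
continuous functions. -/
def IsFeller {S : Type*} [MeasurableSpace S] [TopologicalSpace S]
    (κ : ProbabilityTheory.Kernel S S) : Prop :=
  ∀ f : S → ℝ, Continuous f → IsBddFun f → Continuous (fun x => ∫ y, f y ∂(κ x))

/-- Asymptotic stability: `μst` is an invariant probability measure and `Pⁿμ → μst`
weakly for every Borel probability measure `μ`. -/
def IsAsympStable {S : Type*} [MeasurableSpace S] [TopologicalSpace S]
    (κ : ProbabilityTheory.Kernel S S) (μst : Measure S) : Prop :=
  IsProbabilityMeasure μst ∧ kIter κ 1 μst = μst ∧
    ∀ μ : Measure S, IsProbabilityMeasure μ → ∀ f : S → ℝ, Continuous f → IsBddFun f →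
      Tendsto (fun n => ∫ x, f x ∂(kIter κ n μ)) atTop (𝓝 (∫ x, f x ∂μst))

/-- The e-property in `C_b(S)` at a point `z`: for every bounded continuous `f`,
`sup_{n} |Uⁿf(x) − Uⁿf(z)| → 0` as `x → z`. -/
def EPropCbAt {S : Type*} [MeasurableSpace S] [TopologicalSpace S]
    (κ : ProbabilityTheory.Kernel S S) (z : S) : Prop :=
  ∀ f : S → ℝ, Continuous f → IsBddFun f →
    Tendsto (fun x => ⨆ n : ℕ, |kDual κ n f x - kDual κ n f z|) (𝓝 z) (𝓝 0)

/-!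
The maps `x ↦ Pⁿδₓ` are continuous from `S` to the metrizable space of probability measures, and
they converge pointwise. By Osgood's theorem (Baire category applied to the closed sets on which
all late terms are `ε`-close to each other) the sequence is equicontinuous at residually many
points `z`. Integration of a bounded continuous `f` need not be uniformly continuous, but it is so
near the compact closure of the convergent orbit `n ↦ Pⁿδ_z`, so that equicontinuity passes to the
functions `Uⁿf`. The limit of `Pⁿδₓ` may depend on `x`.
-/

section Equicontinuity

variable {ι X Y Z : Type*} [TopologicalSpace X]

theorem eventually_residual_uniformCauchySeqOnFilter [BaireSpace X] [UniformSpace Y]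
    [(uniformity Y).IsCountablyGenerated] {l : Filter ι} [l.IsCountablyGenerated]
    {F : ι → X → Y} (hF : ∀ i, Continuous (F i)) (hcauchy : ∀ x, Cauchy (l.map (F · x))) :
    ∀ᶠ z in residual X, UniformCauchySeqOnFilter F l (𝓝 z) := by
  obtain ⟨V, hV, hVbasis⟩ := uniformity_hasBasis_closed (α := Y).exists_antitone_subbasis
  obtain ⟨A, hA⟩ := l.exists_antitone_basis
  let G (m N : ℕ) : Set X := {x | ∀ i ∈ A N, ∀ j ∈ A N, (F i x, F j x) ∈ V m}
  have hclosed (m N : ℕ) : IsClosed (G m N) := by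
    simp only [G, Set.ofPred_forall]
    exact isClosed_biInter fun i _ => isClosed_biInter fun j _ =>
      (hV m).2.preimage ((hF i).prodMk (hF j))
  have hcover (m : ℕ) : ⋃ N, G m N = Set.univ := by
    refine Set.eq_univ_of_forall fun x => ?_
    have hpair := cauchy_map_iff.1 (hcauchy x) |>.2 (hV m).1
    obtain ⟨N, -, hN⟩ := hA.toHasBasis.prod_self.mem_iff.1 hpair
    exact Set.mem_iUnion.2 ⟨N, fun i hi j hj => hN (Set.mk_mem_prod hi hj)⟩
  have hresidual (m : ℕ) : ∀ᶠ z in residual X, z ∈ ⋃ N, interior (G m N) :=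
    residual_of_dense_open (isOpen_iUnion fun _ => isOpen_interior)
      (dense_iUnion_interior_of_closed (hclosed m) (hcover m))
  filter_upwards [eventually_countable_forall.2 hresidual] with z hz u hu
  obtain ⟨m, hm⟩ := hVbasis.mem_iff.1 hu
  obtain ⟨N, hN⟩ := Set.mem_iUnion.1 (hz m)
  filter_upwards [prod_mem_prod (prod_mem_prod (hA.mem N) (hA.mem N))
    (mem_interior_iff_mem_nhds.1 hN)] with p ⟨⟨hi, hj⟩, hx⟩
  exact hm (hx _ hi _ hj)

theorem equicontinuousAt_of_uniformCauchySeqOnFilter [UniformSpace Y] {F : ι → X → Y} {z : X}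
    (hF : ∀ i, ContinuousAt (F i) z) (hcauchy : UniformCauchySeqOnFilter F cofinite (𝓝 z)) :
    EquicontinuousAt F z := by
  intro u hu
  obtain ⟨v, hv, hvu⟩ := comp3_mem_uniformity hu
  obtain ⟨A, hA, W, hW, hAW⟩ := mem_prod_iff.1 (hcauchy v hv)
  obtain ⟨B, hB, hBA⟩ := mem_prod_same_iff.1 hA
  have hclose {i j : ι} {x : X} (hi : i ∈ B) (hj : j ∈ B) (hx : x ∈ W) : (F i x, F j x) ∈ v :=
    hAW (Set.mk_mem_prod (hBA (Set.mk_mem_prod hi hj)) hx)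
  have hcont (i : ι) {w : Set (Y × Y)} (hw : w ∈ uniformity Y) :
      ∀ᶠ x in 𝓝 z, (F i z, F i x) ∈ w := Uniform.tendsto_nhds_right.1 (hF i) hw
  have hfinite : ∀ᶠ x in 𝓝 z, ∀ i ∈ Bᶜ, (F i z, F i x) ∈ u :=
    (eventually_all_finite hB).2 fun i _ => hcont i hu
  obtain rfl | ⟨j, hj⟩ := B.eq_empty_or_nonempty
  · filter_upwards [hfinite] with x hx i using hx i (Set.notMem_empty i)
  filter_upwards [hfinite, hcont j hv, hW] with x hx hjx hxW i
  by_cases hi : i ∈ B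
  · exact hvu ⟨F j z, hclose hi hj (mem_of_mem_nhds hW), F j x, hjx, hclose hj hi hxW⟩
  · exact hx i hi

theorem equicontinuousAt_comp_of_isCompact [UniformSpace Y] [UniformSpace Z]
    {F : ι → X → Y} {z : X} (hF : EquicontinuousAt F z) {K : Set Y} (hK : IsCompact K)
    (hFK : ∀ i, F i z ∈ K) {g : Y → Z} (hg : ∀ y ∈ K, ContinuousAt g y) :
    EquicontinuousAt (fun i => g ∘ F i) z := fun _ hu =>
  (hF _ (hK.uniformContinuousAt_of_continuousAt g hg hu)).mono fun _ hx i => hx i (hFK i)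

theorem eventually_residual_equicontinuousAt_comp [BaireSpace X] [TopologicalSpace Y]
    [TopologicalSpace.PseudoMetrizableSpace Y] [UniformSpace Z] {F : ℕ → X → Y}
    (hF : ∀ n, Continuous (F n)) (hlim : ∀ x, ∃ y, Tendsto (F · x) atTop (𝓝 y)) :
    ∀ᶠ z in residual X, ∀ g : Y → Z, Continuous g → EquicontinuousAt (fun n => g ∘ F n) z := by
  let := TopologicalSpace.pseudoMetrizableSpacePseudoMetric Y
  have hcauchy (x : X) : CauchySeq (F · x) := (hlim x).elim fun _ hy => hy.cauchySeq
  filter_upwards [eventually_residual_uniformCauchySeqOnFilter hF hcauchy] with z hz g hg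
  have hequi : EquicontinuousAt F z :=
    equicontinuousAt_of_uniformCauchySeqOnFilter (fun n => (hF n).continuousAt)
      (Nat.cofinite_eq_atTop ▸ hz)
  obtain ⟨y, hy⟩ := hlim z
  exact equicontinuousAt_comp_of_isCompact hequi hy.isCompact_insert_range
    (fun n => Set.mem_insert_of_mem y (Set.mem_range_self n)) fun _ _ => hg.continuousAt

theorem tendsto_iSup_dist_of_equicontinuousAt [PseudoMetricSpace Y] {F : ι → X → Y} {z : X}
    (hF : EquicontinuousAt F z) : Tendsto (fun x => ⨆ i, dist (F i x) (F i z)) (𝓝 z) (𝓝 0) := by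
  refine Metric.tendsto_nhds.2 fun ε hε => ?_
  filter_upwards [Metric.equicontinuousAt_iff_right.1 hF (ε / 2) (half_pos hε)] with x hx
  have hle : ⨆ i, dist (F i x) (F i z) ≤ ε / 2 :=
    Real.iSup_le (fun i => dist_comm (F i x) _ ▸ (hx i).le) (half_pos hε).le
  rw [Real.dist_0_eq_abs, abs_of_nonneg (Real.iSup_nonneg fun _ => dist_nonneg)]
  exact hle.trans_lt (half_lt_self hε)

end Equicontinuity

section MarkovOperator

variable {S : Type*} [MeasurableSpace S] {κ : Kernel S S} {f : S → ℝ}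

theorem IsBddFun.integrable (hb : IsBddFun f) (hf : Measurable f) (μ : Measure S)
    [IsFiniteMeasure μ] : Integrable f μ :=
  let ⟨C, hC⟩ := hb
  .of_bound hf.aestronglyMeasurable C (ae_of_all μ hC)

theorem IsBddFun.integral_kernel (hb : IsBddFun f) (κ : Kernel S S) [IsMarkovKernel κ] :
    IsBddFun fun x => ∫ y, f y ∂(κ x) :=
  let ⟨C, hC⟩ := hb
  ⟨C, fun x => by
    simpa using norm_integral_le_of_norm_le_const (μ := κ x) (f := f) (ae_of_all _ hC)⟩

instance isProbabilityMeasure_kIter [IsMarkovKernel κ] (n : ℕ) (μ : Measure S)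
    [IsProbabilityMeasure μ] : IsProbabilityMeasure (kIter κ n μ) := by
  induction n with
  | zero => assumption
  | succ n ih => exact inferInstanceAs (IsProbabilityMeasure (κ ∘ₘ kIter κ n μ))

theorem kDual_zero (κ : Kernel S S) (hf : StronglyMeasurable f) : kDual κ 0 f = f :=
  funext fun x => integral_dirac' f x hf

theorem kDual_succ_apply {n : ℕ} {x : S}
    (hf : Integrable f (kIter κ (n + 1) (Measure.dirac x))) :
    kDual κ (n + 1) f x = kDual κ n (fun y => ∫ w, f w ∂(κ y)) x :=
  Kernel.integral_comp (κ := Kernel.const S (kIter κ n (Measure.dirac x))) (a := x) hf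

variable [IsMarkovKernel κ]

/-- The law `Pⁿδₓ` after `n` steps of the chain started at `x`, bundled as a probability measure
so that the topology of weak convergence is available. -/
noncomputable def stepLaw (κ : Kernel S S) [IsMarkovKernel κ] (n : ℕ) (x : S) :
    ProbabilityMeasure S :=
  ⟨kIter κ n (Measure.dirac x), inferInstance⟩

variable [TopologicalSpace S] [OpensMeasurableSpace S]

theorem IsFeller.continuous_kDual (hκ : IsFeller κ) (n : ℕ) (hf : Continuous f)
    (hb : IsBddFun f) : Continuous (kDual κ n f) := by
  induction n generalizing f with
  | zero => rwa [kDual_zero κ hf.measurable.stronglyMeasurable]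
  | succ n ih =>
    have hsucc : kDual κ (n + 1) f = kDual κ n fun y => ∫ w, f w ∂(κ y) :=
      funext fun _ => kDual_succ_apply (hb.integrable hf.measurable _)
    rw [hsucc]
    exact ih (hκ f hf hb) (hb.integral_kernel κ)

theorem IsFeller.continuous_stepLaw (hκ : IsFeller κ) (n : ℕ) : Continuous (stepLaw κ n) :=
  ProbabilityMeasure.continuous_iff_forall_continuous_integral.2 fun f =>
    hκ.continuous_kDual n f.continuous ⟨‖f‖, f.norm_coe_le_norm⟩

theorem tendsto_stepLaw_of_forall_kDual {x : S} {ν : ProbabilityMeasure S}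
    (h : ∀ f : S → ℝ, Continuous f → IsBddFun f →
      Tendsto (fun n => kDual κ n f x) atTop (𝓝 (∫ y, f y ∂ν))) :
    Tendsto (fun n => stepLaw κ n x) atTop (𝓝 ν) :=
  ProbabilityMeasure.tendsto_iff_forall_integral_tendsto.2 fun f =>
    h f f.continuous ⟨‖f‖, f.norm_coe_le_norm⟩

theorem IsBddFun.continuous_integral_probabilityMeasure (hb : IsBddFun f) (hf : Continuous f) :
    Continuous fun μ : ProbabilityMeasure S => ∫ y, f y ∂μ :=
  let ⟨C, hC⟩ := hb
  ProbabilityMeasure.continuous_integral_boundedContinuousFunction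
    (.ofNormedAddCommGroup f hf C hC)

theorem ePropCbAt_of_equicontinuousAt_stepLaw {z : S}
    (h : ∀ g : ProbabilityMeasure S → ℝ, Continuous g →
      EquicontinuousAt (fun n => g ∘ stepLaw κ n) z) : EPropCbAt κ z := fun _ hf hb =>
  tendsto_iSup_dist_of_equicontinuousAt (h _ (hb.continuous_integral_probabilityMeasure hf))

end MarkovOperator

theorem meagre_of_not_eProp_of_asympStable_general
    {S : Type*} [TopologicalSpace S] [TopologicalSpace.PseudoMetrizableSpace S]
    [TopologicalSpace.SeparableSpace S] [BaireSpace S] [MeasurableSpace S] [OpensMeasurableSpace S]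
    (κ : Kernel S S) [IsMarkovKernel κ] (hFeller : IsFeller κ)
    (hlim : ∀ x, ∃ ν : ProbabilityMeasure S, ∀ f : S → ℝ, Continuous f → IsBddFun f →
      Tendsto (fun n => kDual κ n f x) atTop (𝓝 (∫ y, f y ∂ν))) :
    IsMeagre {z : S | ¬ EPropCbAt κ z} ∧ Dense {z : S | EPropCbAt κ z} := by
  have hconv (x : S) : ∃ ν, Tendsto (fun n => stepLaw κ n x) atTop (𝓝 ν) :=
    (hlim x).imp fun _ => tendsto_stepLaw_of_forall_kDual
  have hresidual : ∀ᶠ z in residual S, EPropCbAt κ z :=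
    (eventually_residual_equicontinuousAt_comp hFeller.continuous_stepLaw hconv).mono
      fun _ => ePropCbAt_of_equicontinuousAt_stepLaw
  refine ⟨?_, dense_of_mem_residual hresidual⟩
  rwa [IsMeagre, ← Set.compl_ofPred, compl_compl]

/-- For an asymptotically stable Markov–Feller operator on a Polish metric space, the set of
points at which the e-property in `C_b(S)` fails is meagre, and the set of points at which it
holds is dense. -/
theorem meagre_of_not_eProp_of_asympStable
    {S : Type*} [MetricSpace S] [CompleteSpace S] [SecondCountableTopology S]
    [MeasurableSpace S] [BorelSpace S]
    (κ : ProbabilityTheory.Kernel S S) [IsMarkovKernel κ]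
    (hFeller : IsFeller κ) (μst : Measure S) (hstab : IsAsympStable κ μst) :
    IsMeagre {z : S | ¬ EPropCbAt κ z} ∧ Dense {z : S | EPropCbAt κ z} := by
  exact meagre_of_not_eProp_of_asympStable_general κ hFeller fun x =>
    ⟨⟨μst, hstab.1⟩, hstab.2.2 (Measure.dirac x) inferInstance⟩
end

section
/- Let S be a metric space, let f : S → ℝ be bounded and continuous, and let K ⊆ S be a compact set. Then for every ε > 0 there exists a bounded Lipschitz function L : S → ℝ such that sup_{x∈K} |f(x) − L(x)| ≤ ε and sup_{x∈S} |L(x)| ≤ sup_{x∈S} |f(x)|. -/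
open Metric

/-!
The infimal convolution `x ↦ ⨅ y ∈ s, f y + c * dist x y` is `c`-Lipschitz and lies below `f` on
`s`. Suppose `a ≤ f ≤ b` on `s` and, by uniform continuity, `f` varies on `s` by less than `ε` at
distances below `δ`. With `c = (b - a) / δ`, points `y` at distance at least `δ` from `x ∈ s` cost
at least `a + (b - a) ≥ f x`, and nearer points cost at least `f x - ε`. Hence the convolution is
within `ε` of `f` on `s`, and projecting its values to `[a, b]` spoils neither the approximation
nor the Lipschitz property. On a compact set, uniform continuity is the Heine–Cantor theorem.
-/

section PaschHausdorff

open Set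
open scoped NNReal

variable {S : Type*} [PseudoMetricSpace S] {f : S → ℝ} {s : Set S} {x : S}

/-- The Pasch–Hausdorff envelope of `f` on `s`, that is, the infimal convolution of `f|ₛ` with
`c * dist`, used as a Lipschitz approximation of `f` on `s`. It is defined at every point of the
ambient space. It takes junk values if `s` is empty or the infimum is `-∞`. -/
noncomputable def paschHausdorffEnvelope (f : S → ℝ) (s : Set S) (c : ℝ≥0) (x : S) : ℝ :=
  ⨅ y : s, (f y + c * dist x y)

theorem bddBelow_range_add_mul_dist (hf : BddBelow (f '' s)) (c : ℝ≥0) (x : S) :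
    BddBelow (range fun y : s => f y + c * dist x y) := by
  obtain ⟨a, ha⟩ := hf
  refine ⟨a, forall_mem_range.2 fun y => ?_⟩
  exact le_add_of_le_of_nonneg (ha (mem_image_of_mem f y.2)) (by positivity)

theorem lipschitzWith_paschHausdorffEnvelope (hf : BddBelow (f '' s)) (c : ℝ≥0) :
    LipschitzWith c (paschHausdorffEnvelope f s c) := by
  refine LipschitzWith.of_le_add_mul c fun x z => ?_
  rcases isEmpty_or_nonempty s with hs | hs
  · simp only [paschHausdorffEnvelope, Real.iInf_of_isEmpty, zero_add]
    positivity
  rw [← sub_le_iff_le_add]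
  refine le_ciInf fun y => ?_
  rw [sub_le_iff_le_add]
  calc
    paschHausdorffEnvelope f s c x ≤ f y + c * dist x y :=
      ciInf_le (bddBelow_range_add_mul_dist hf c x) y
    _ ≤ f y + c * (dist x z + dist z y) := by gcongr; exact dist_triangle x z y
    _ = f y + c * dist z y + c * dist x z := by ring

theorem paschHausdorffEnvelope_le (hf : BddBelow (f '' s)) (c : ℝ≥0) (hx : x ∈ s) :
    paschHausdorffEnvelope f s c x ≤ f x :=
  ciInf_le_of_le (bddBelow_range_add_mul_dist hf c x) ⟨x, hx⟩ <| by
    rw [dist_self, mul_zero, add_zero]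

theorem le_paschHausdorffEnvelope {a r δ : ℝ} {c : ℝ≥0} (hs : s.Nonempty)
    (h_lower : ∀ y ∈ s, a ≤ f y) (h_near : ∀ y ∈ s, dist x y < δ → r ≤ f y)
    (h_far : r ≤ a + c * δ) : r ≤ paschHausdorffEnvelope f s c x := by
  have : Nonempty s := hs.to_subtype
  refine le_ciInf fun y => ?_
  rcases lt_or_ge (dist x y) δ with hxy | hxy
  · exact le_add_of_le_of_nonneg (h_near y y.2 hxy) (by positivity)
  · calc
      r ≤ a + c * δ := h_far
      _ ≤ f y + c * dist x y := by gcongr; exact h_lower y y.2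

theorem exists_abs_sub_paschHausdorffEnvelope_le {a b ε : ℝ} (hf : UniformContinuousOn f s)
    (hf_maps : MapsTo f s (Icc a b)) (hε : 0 < ε) :
    ∃ c : ℝ≥0, ∀ x ∈ s, |f x - paschHausdorffEnvelope f s c x| ≤ ε := by
  obtain ⟨δ, hδ, hfδ⟩ := uniformContinuousOn_iff.1 hf ε hε
  let c : ℝ≥0 := ((b - a) / δ).toNNReal
  have hcδ : b - a ≤ c * δ := (div_le_iff₀ hδ).1 (Real.le_coe_toNNReal _)
  refine ⟨c, fun x hx => ?_⟩
  have h_le : paschHausdorffEnvelope f s c x ≤ f x :=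
    paschHausdorffEnvelope_le (bddBelow_Icc.mono hf_maps.image_subset) c hx
  have h_ge : f x - ε ≤ paschHausdorffEnvelope f s c x := by
    refine le_paschHausdorffEnvelope (δ := δ) ⟨x, hx⟩ (fun y hy => (hf_maps hy).1) ?_ ?_
    · intro y hy hxy
      exact (sub_lt_comm.1 (abs_lt.1 (hfδ x hx y hy hxy)).2).le
    · linarith [(hf_maps hx).2]
  rw [abs_of_nonneg (sub_nonneg.2 h_le)]
  exact sub_le_comm.1 h_ge

theorem exists_lipschitz_approx_on_compact_general {a b : ℝ} (hf : UniformContinuousOn f s)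
    (hab : a ≤ b) (hf_maps : MapsTo f s (Icc a b)) :
    ∀ ε > 0, ∃ L : S → ℝ, (∃ c : ℝ≥0, LipschitzWith c L) ∧
      (∀ x ∈ s, |f x - L x| ≤ ε) ∧ (∀ x : S, L x ∈ Icc a b) := by
  intro ε hε
  obtain ⟨c, hc⟩ := exists_abs_sub_paschHausdorffEnvelope_le hf hf_maps hε
  have hg : LipschitzWith c (paschHausdorffEnvelope f s c) :=
    lipschitzWith_paschHausdorffEnvelope (bddBelow_Icc.mono hf_maps.image_subset) c
  refine ⟨fun x => projIcc a b hab (paschHausdorffEnvelope f s c x),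
    ⟨_, (LipschitzWith.subtype_val _).comp ((LipschitzWith.projIcc hab).comp hg)⟩,
    fun x hx => ?_, fun x => Subtype.coe_prop _⟩
  calc
    |f x - projIcc a b hab (paschHausdorffEnvelope f s c x)|
      = |(projIcc a b hab (f x) : ℝ) - projIcc a b hab (paschHausdorffEnvelope f s c x)| := by
        rw [projIcc_of_mem hab (hf_maps hx)]
    _ ≤ |f x - paschHausdorffEnvelope f s c x| := abs_projIcc_sub_projIcc hab
    _ ≤ ε := hc x hx

end PaschHausdorff

/-- On a metric space, a bounded continuous function can be approximated uniformly on any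
compact set, within any `ε > 0`, by a bounded Lipschitz function whose sup norm does not
exceed that of the original function. -/
theorem exists_lipschitz_approx_on_compact
    {S : Type*} [MetricSpace S] (f : S → ℝ)
    (hf_cont : Continuous f) (hf_bdd : ∃ C : ℝ, ∀ x, |f x| ≤ C)
    (K : Set S) (hK : IsCompact K) :
    ∀ ε > 0, ∃ L : S → ℝ, (∃ c : NNReal, LipschitzWith c L) ∧
      (∀ x ∈ K, |f x - L x| ≤ ε) ∧ (∀ x : S, |L x| ≤ ⨆ y : S, |f y|) := by
  have h_le : ∀ x, |f x| ≤ ⨆ y, |f y| := le_ciSup (hf_bdd.imp fun _ => Set.forall_mem_range.2)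
  simpa only [Set.mem_Icc, ← abs_le] using exists_lipschitz_approx_on_compact_general
    (hK.uniformContinuousOn_of_continuous hf_cont.continuousOn)
    (neg_le_self (Real.iSup_nonneg fun y => abs_nonneg (f y))) fun x _ => abs_le.1 (h_le x)
end

section
/- Consider the Markov operator P on S = ℝ given by the deterministic kernel κ(x,·) = δ_{x+1}, so that Uⁿf(x) = f(x+n). Then P has the e-property in L_FM(ℝ) at every point (for every 1-Lipschitz f : ℝ → [0,1] and every z, lim_{x→z} sup_{n∈ℕ} |f(x+n) − f(z+n)| = 0), but for every z ∈ ℝ there exists a bounded continuous function f : ℝ → ℝ such that lim sup_{x→z} sup_{n∈ℕ} |f(x+n) − f(z+n)| ≥ 1; in particular P does not have the e-property in C_b(ℝ) at any point. -/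
open Filter Topology

/-! An isometry `T` moves `x` and `z` along their orbits without changing their distance, so
composing with its iterates preserves any modulus of uniform continuity. If the orbit of `z` escapes
to infinity, the function `y ↦ min 1 (dist y z * infDist y {Tᵐ z | m})` vanishes on this orbit while
it grows ever more steeply next to it: for `x ≠ z` close to `z`, the points `Tⁿ x` stay at distance
at least `dist x z` from the whole orbit of `z`, and the factor `dist (Tⁿ x) z` tends to infinity.
-/

section OrbitGap

/-- The uniform distance `sup_n |Uⁿf(x) − Uⁿf(z)|` of `f` along two orbits, for `Uf = f ∘ T`. The
e-property of `T` for `f` at `z` says that it tends to `0` as `x → z`. It takes the junk value `0`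
at points `x` where the differences are unbounded in `n`. -/
noncomputable def orbitGap {X : Type*} (T : X → X) (f : X → ℝ) (z x : X) : ℝ :=
  ⨆ n : ℕ, |f (T^[n] x) - f (T^[n] z)|

lemma orbitGap_nonneg {X : Type*} (T : X → X) (f : X → ℝ) (z x : X) : 0 ≤ orbitGap T f z x :=
  Real.iSup_nonneg fun _ => abs_nonneg _

lemma tendsto_orbitGap_of_equicontinuousAt {X : Type*} [TopologicalSpace X] {T : X → X}
    {f : X → ℝ} {z : X} (h : EquicontinuousAt (fun n : ℕ => f ∘ T^[n]) z) :
    Tendsto (orbitGap T f z) (𝓝 z) (𝓝 0) := by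
  refine tendsto_order.2 ⟨fun a ha => .of_forall fun x => ha.trans_le (orbitGap_nonneg T f z x),
    fun ε hε => ?_⟩
  filter_upwards [Metric.equicontinuousAt_iff_right.1 h (ε / 2) (half_pos hε)] with x hx
  refine (ciSup_le fun n => ?_).trans_lt (half_lt_self hε)
  exact (abs_sub_comm _ _).trans_le (hx n).le

lemma uniformEquicontinuous_comp_iterate {X Y : Type*} [PseudoMetricSpace X]
    [UniformSpace Y] {T : X → X} (hT : LipschitzWith 1 T) {f : X → Y} (hf : UniformContinuous f) :
    UniformEquicontinuous fun n : ℕ => f ∘ T^[n] := by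
  have hiter : UniformEquicontinuous fun n : ℕ => T^[n] :=
    LipschitzWith.uniformEquicontinuous _ 1 fun n => by simpa only [one_pow] using hT.iterate n
  exact fun U hU => hiter _ (hf hU)

end OrbitGap

section EscapingOrbit

lemma isometry_iterate {X : Type*} [PseudoEMetricSpace X] {T : X → X}
    (hT : Isometry T) (n : ℕ) : Isometry T^[n] := by
  induction n with
  | zero => exact isometry_id
  | succ n ih => exact ih.comp hT

section PseudoMetricSpace

variable {X : Type*} [PseudoMetricSpace X] {T : X → X} {z : X}

lemma iterate_succ_ne_of_tendsto_cobounded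
    (hz : Tendsto (fun n : ℕ => T^[n] z) atTop (Bornology.cobounded X)) (k : ℕ) :
    T^[k + 1] z ≠ z := by
  intro hk
  have hfix (n : ℕ) : T^[(k + 1) * n] z = z := by
    rw [Function.iterate_mul, Function.iterate_fixed hk]
  have hconst : Tendsto (fun _ : ℕ => z) atTop (Bornology.cobounded X) := by
    simpa only [Function.comp_def, hfix] using
      hz.comp (tendsto_id.const_mul_atTop' k.succ_pos)
  exact tendsto_const_nhds.not_tendsto (Metric.disjoint_nhds_cobounded z) hconst

lemma dist_le_dist_iterate_of_two_mul_dist_le (hT : Isometry T) {x : X}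
    (hx : ∀ k : ℕ, 2 * dist x z ≤ dist (T^[k + 1] z) z) (n m : ℕ) :
    dist x z ≤ dist (T^[n] x) (T^[m] z) := by
  rcases lt_trichotomy n m with hnm | rfl | hmn
  · obtain ⟨k, rfl⟩ := Nat.exists_eq_add_of_lt hnm
    rw [add_assoc, Function.iterate_add_apply, (isometry_iterate hT n).dist_eq]
    linarith [hx k, dist_triangle_left (T^[k + 1] z) z x]
  · exact ((isometry_iterate hT n).dist_eq x z).ge
  · obtain ⟨k, rfl⟩ := Nat.exists_eq_add_of_lt hmn
    rw [add_assoc, Function.iterate_add_apply, (isometry_iterate hT m).dist_eq]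
    linarith [hx k, dist_triangle_left (T^[k + 1] z) z (T^[k + 1] x),
      (isometry_iterate hT (k + 1)).dist_eq x z]

lemma tendsto_dist_iterate_atTop (hT : Isometry T)
    (hz : Tendsto (fun n : ℕ => T^[n] z) atTop (Bornology.cobounded X)) (x : X) :
    Tendsto (fun n : ℕ => dist (T^[n] x) z) atTop atTop := by
  refine tendsto_atTop_mono (fun n => ?_) <| tendsto_atTop_add_const_right _ (-dist x z) <|
    (Metric.tendsto_dist_right_cobounded_atTop z).comp hz
  have htriangle : dist (T^[n] z) z ≤ dist x z + dist (T^[n] x) z :=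
    (isometry_iterate hT n).dist_eq x z ▸ dist_triangle_left _ _ _
  simp only [Function.comp_apply]
  linarith

/-- The function witnessing that the e-property fails at `z`: it vanishes on the orbit of `z` under
`T`, the factor `dist y z` makes it steeper and steeper along this orbit, and truncation at `1`
makes it bounded. -/
noncomputable def steepeningBump (T : X → X) (z y : X) : ℝ :=
  min 1 (dist y z * Metric.infDist y (Set.range fun m : ℕ => T^[m] z))

lemma continuous_steepeningBump : Continuous (steepeningBump T z) :=
  continuous_const.min <|
    (continuous_id.dist continuous_const).mul (Metric.continuous_infDist_pt _)

lemma abs_steepeningBump_le_one (y : X) : |steepeningBump T z y| ≤ 1 := by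
  have hnonneg : 0 ≤ steepeningBump T z y :=
    le_min zero_le_one (mul_nonneg dist_nonneg Metric.infDist_nonneg)
  rw [abs_of_nonneg hnonneg]
  exact min_le_left _ _

lemma steepeningBump_iterate_self (n : ℕ) : steepeningBump T z (T^[n] z) = 0 := by
  have hinfDist : Metric.infDist (T^[n] z) (Set.range fun m : ℕ => T^[m] z) = 0 :=
    Metric.infDist_zero_of_mem ⟨n, rfl⟩
  rw [steepeningBump, hinfDist, mul_zero, min_eq_right zero_le_one]

lemma orbitGap_steepeningBump (x : X) :
    orbitGap T (steepeningBump T z) z x = ⨆ n : ℕ, |steepeningBump T z (T^[n] x)| := by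
  simp only [orbitGap, steepeningBump_iterate_self, sub_zero]

lemma orbitGap_steepeningBump_le_one (x : X) : orbitGap T (steepeningBump T z) z x ≤ 1 := by
  rw [orbitGap_steepeningBump]
  exact ciSup_le fun _ => abs_steepeningBump_le_one _

end PseudoMetricSpace

section MetricSpace

variable {X : Type*} [MetricSpace X] {T : X → X} {z : X}

lemma exists_pos_le_dist_iterate_succ
    (hz : Tendsto (fun n : ℕ => T^[n] z) atTop (Bornology.cobounded X)) :
    ∃ δ > 0, ∀ k : ℕ, δ ≤ dist (T^[k + 1] z) z := by
  have hdist : Tendsto (fun k : ℕ => dist (T^[k + 1] z) z) cofinite atTop := by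
    rw [Nat.cofinite_eq_atTop]
    exact (Metric.tendsto_dist_right_cobounded_atTop z).comp (hz.comp (tendsto_add_atTop_nat 1))
  obtain ⟨k, hk⟩ := hdist.exists_forall_le
  exact ⟨_, dist_pos.2 (iterate_succ_ne_of_tendsto_cobounded hz k), hk⟩

lemma eventually_dist_le_infDist_iterate (hT : Isometry T)
    (hz : Tendsto (fun n : ℕ => T^[n] z) atTop (Bornology.cobounded X)) :
    ∀ᶠ x in 𝓝 z, ∀ n : ℕ,
      dist x z ≤ Metric.infDist (T^[n] x) (Set.range fun m : ℕ => T^[m] z) := by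
  obtain ⟨δ, hδ, hle⟩ := exists_pos_le_dist_iterate_succ hz
  filter_upwards [Metric.ball_mem_nhds z (half_pos hδ)] with x hx n
  rw [Metric.mem_ball] at hx
  rw [Metric.le_infDist (Set.range_nonempty _), Set.forall_mem_range]
  exact dist_le_dist_iterate_of_two_mul_dist_le hT (fun k => by linarith [hle k]) n

lemma eventually_exists_steepeningBump_iterate_eq_one (hT : Isometry T)
    (hz : Tendsto (fun n : ℕ => T^[n] z) atTop (Bornology.cobounded X)) :
    ∀ᶠ x in 𝓝[≠] z, ∃ n : ℕ, steepeningBump T z (T^[n] x) = 1 := by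
  filter_upwards [self_mem_nhdsWithin,
    (eventually_dist_le_infDist_iterate hT hz).filter_mono nhdsWithin_le_nhds] with x hne hx
  have hpos : 0 < dist x z := dist_pos.2 hne
  obtain ⟨n, hn⟩ :=
    ((tendsto_dist_iterate_atTop hT hz x).eventually_ge_atTop (dist x z)⁻¹).exists
  refine ⟨n, min_eq_left ?_⟩
  calc
    1 = (dist x z)⁻¹ * dist x z := (inv_mul_cancel₀ hpos.ne').symm
    _ ≤ dist (T^[n] x) z * Metric.infDist (T^[n] x) (Set.range fun m : ℕ => T^[m] z) := by
      gcongr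
      exact hx n

lemma tendsto_orbitGap_steepeningBump (hT : Isometry T)
    (hz : Tendsto (fun n : ℕ => T^[n] z) atTop (Bornology.cobounded X)) :
    Tendsto (orbitGap T (steepeningBump T z) z) (𝓝[≠] z) (𝓝 1) := by
  refine tendsto_const_nhds.congr' ?_
  filter_upwards [eventually_exists_steepeningBump_iterate_eq_one hT hz] with x ⟨n, hn⟩
  refine le_antisymm ?_ (orbitGap_steepeningBump_le_one x)
  rw [orbitGap_steepeningBump]
  exact le_ciSup_of_le ⟨1, Set.forall_mem_range.2 fun _ => abs_steepeningBump_le_one _⟩ n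
    (by rw [hn, abs_one])

lemma one_le_limsup_orbitGap_steepeningBump (hT : Isometry T)
    (hz : Tendsto (fun n : ℕ => T^[n] z) atTop (Bornology.cobounded X)) [(𝓝[≠] z).NeBot] :
    1 ≤ limsup (orbitGap T (steepeningBump T z) z) (𝓝 z) := by
  have hlim := tendsto_orbitGap_steepeningBump hT hz
  have hbdd : IsBoundedUnder (· ≤ ·) (𝓝 z) (orbitGap T (steepeningBump T z) z) :=
    isBoundedUnder_of ⟨1, orbitGap_steepeningBump_le_one⟩
  calc
    1 = limsup (orbitGap T (steepeningBump T z) z) (𝓝[≠] z) := hlim.limsup_eq.symm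
    _ ≤ limsup (orbitGap T (steepeningBump T z) z) (𝓝 z) :=
      limsup_le_limsup_of_le nhdsWithin_le_nhds hlim.isCoboundedUnder_le hbdd

end MetricSpace

end EscapingOrbit

theorem translation_ePropFM_but_not_ePropCb_general {X : Type*} [MetricSpace X] {T : X → X}
    (hT : Isometry T) :
    (∀ f : X → ℝ, UniformContinuous f → ∀ z : X, Tendsto (orbitGap T f z) (𝓝 z) (𝓝 0)) ∧
    (∀ z : X, (𝓝[≠] z).NeBot → Tendsto (fun n : ℕ => T^[n] z) atTop (Bornology.cobounded X) →
      ∃ f : X → ℝ, Continuous f ∧ (∃ C : ℝ, ∀ x, |f x| ≤ C) ∧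
        1 ≤ limsup (orbitGap T f z) (𝓝 z) ∧ ¬ Tendsto (orbitGap T f z) (𝓝 z) (𝓝 0)) := by
  refine ⟨fun f hf z =>
    tendsto_orbitGap_of_equicontinuousAt <|
      (uniformEquicontinuous_comp_iterate hT.lipschitz hf).equicontinuous z,
    fun z _ hz => ⟨steepeningBump T z, continuous_steepeningBump, ⟨1, abs_steepeningBump_le_one⟩,
      one_le_limsup_orbitGap_steepeningBump hT hz, fun h => ?_⟩⟩
  have hpunctured := tendsto_orbitGap_steepeningBump hT hz
  exact zero_ne_one (tendsto_nhds_unique (h.mono_left nhdsWithin_le_nhds) hpunctured)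

lemma orbitGap_add_one (f : ℝ → ℝ) (z : ℝ) :
    orbitGap (· + 1) f z = fun x => ⨆ n : ℕ, |f (x + n) - f (z + n)| := by
  funext x
  simp only [orbitGap, add_right_iterate_apply, nsmul_one]

lemma tendsto_iterate_add_one_cobounded {R : Type*} [NormedRing R] [NormSMulClass ℤ R]
    [Nontrivial R] (z : R) :
    Tendsto (fun n : ℕ => (· + 1)^[n] z) atTop (Bornology.cobounded R) := by
  simp only [add_right_iterate_apply, nsmul_one]
  exact (tendsto_const_add_cobounded z).comp tendsto_natCast_atTop_cobounded

/-- For the Markov operator on `ℝ` generated by the deterministic kernel `κ(x,·) = δ_{x+1}`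
(so that `Uⁿf(x) = f(x+n)`): it has the e-property in `L_FM(ℝ)` at every point, yet at every
point `z` there is a bounded continuous `f` witnessing the failure of the e-property in
`C_b(ℝ)`, with `limsup_{x→z} sup_{n} |Uⁿf(x) − Uⁿf(z)| ≥ 1`. -/
theorem translation_ePropFM_but_not_ePropCb :
    (∀ f : ℝ → ℝ, LipschitzWith 1 f → (∀ x, f x ∈ Set.Icc (0 : ℝ) 1) → ∀ z : ℝ,
      Tendsto (fun x => ⨆ n : ℕ, |f (x + n) - f (z + n)|) (𝓝 z) (𝓝 0)) ∧
    (∀ z : ℝ, ∃ f : ℝ → ℝ, Continuous f ∧ (∃ C : ℝ, ∀ x, |f x| ≤ C) ∧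
      (1 : ℝ) ≤ Filter.limsup (fun x => ⨆ n : ℕ, |f (x + n) - f (z + n)|) (𝓝 z) ∧
      ¬ Tendsto (fun x => ⨆ n : ℕ, |f (x + n) - f (z + n)|) (𝓝 z) (𝓝 0)) := by
  have h := translation_ePropFM_but_not_ePropCb_general (isometry_add_right (1 : ℝ))
  simp only [orbitGap_add_one] at h
  exact ⟨fun f hf _ => h.1 f hf.uniformContinuous,
    fun z => h.2 z inferInstance (tendsto_iterate_add_one_cobounded z)⟩
end

section
/- Let S be a Polish metric space and let P be an asymptotically stable Markov-Feller operator on S with invariant probability measure μ*. Then for every k ∈ ℕ, k ≥ 1, the set O_k = { x ∈ S : there exist an open neighbourhood O of x and N ∈ ℕ such that for all n ≥ N and all y ∈ O, d_FM(Pⁿδ_y, μ*) ≤ 1/k } is an open and dense subset of S. -/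
open MeasureTheory ProbabilityTheory Filter Topology

/-- The Fortet–Mourier distance of two finite Borel measures: the supremum of
`|∫ f dμ − ∫ f dν|` over all 1-Lipschitz functions `f : S → [0,1]`. -/
noncomputable def dFM {S : Type*} [MeasurableSpace S] [PseudoMetricSpace S]
    (μ ν : Measure S) : ℝ :=
  ⨆ f : {f : S → ℝ // LipschitzWith 1 f ∧ ∀ x, f x ∈ Set.Icc (0 : ℝ) 1},
    |∫ x, f.1 x ∂μ - ∫ x, f.1 x ∂ν|

/-- The open set `O_k` of points having a neighbourhood on which, from some time on, all
`n`-step distributions are `1/k`-close to the invariant measure in Fortet–Mourier distance. -/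
def Ok {S : Type*} [MeasurableSpace S] [MetricSpace S]
    (κ : ProbabilityTheory.Kernel S S) (μst : Measure S) (k : ℕ) : Set S :=
  {x : S | ∃ O : Set S, IsOpen O ∧ x ∈ O ∧ ∃ N : ℕ, ∀ n ≥ N, ∀ y ∈ O,
    dFM (kIter κ n (Measure.dirac y)) μst ≤ 1 / (k : ℝ)}

/-!
Weak convergence on a separable metric space implies convergence in the Lévy–Prokhorov distance,
which dominates the Fortet–Mourier distance, so that `dFM (Pⁿδ_y) μ* → 0` for every `y`. By the
Feller property `Pⁿδ_y` depends weakly continuously on `y`, and the Fortet–Mourier distance, being a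
supremum of weakly continuous functionals, is lower semicontinuous; hence the sets
`Y_N = {y | ∀ n ≥ N, dFM (Pⁿδ_y) μ* ≤ 1/k}` are closed. They cover `S` by the first remark, the
union of their interiors is `O_k`, and Baire's theorem makes it dense.
-/

open Set BoundedContinuousFunction

section Baire

variable {ι X : Type*} [Preorder ι] [IsDirectedOrder ι] [Nonempty ι] [Countable ι]
  [TopologicalSpace X] [BaireSpace X]

theorem dense_iUnion_interior_biInter_of_eventually_mem {F : ι → Set X}
    (hF : ∀ i, IsClosed (F i)) (hmem : ∀ x, ∀ᶠ i in atTop, x ∈ F i) :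
    Dense (⋃ i, interior (⋂ j ≥ i, F j)) := by
  refine dense_iUnion_interior_of_closed (fun i => isClosed_biInter fun j _ => hF j)
    (eq_univ_of_forall fun x => ?_)
  obtain ⟨i, hi⟩ := eventually_atTop.1 (hmem x)
  exact mem_iUnion.2 ⟨i, mem_iInter₂.2 hi⟩

end Baire

section LevyProkhorov

theorem setIntegral_Ioc_measureReal_le_integral {α : Type*} [MeasurableSpace α] {μ : Measure α}
    {g : α → ℝ} (hg : Integrable g μ) (hg0 : 0 ≤ g) {M : ℝ} (hM : 0 ≤ M) :
    ∫ t in Ioc 0 M, μ.real {a | t ≤ g a} ≤ ∫ a, g a ∂μ := by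
  have hmin0 (a : α) : 0 ≤ min (g a) M := le_min (hg0 a) hM
  have hmin : Integrable (fun a => min (g a) M) μ :=
    hg.mono' (hg.aestronglyMeasurable.inf aestronglyMeasurable_const) <|
      .of_forall fun a => by simp [abs_of_nonneg (hmin0 a)]
  calc ∫ t in Ioc 0 M, μ.real {a | t ≤ g a}
      = ∫ t in Ioc 0 M, μ.real {a | t ≤ min (g a) M} :=
        setIntegral_congr_fun measurableSet_Ioc fun t ht => by simp [ht.2]
    _ = ∫ a, min (g a) M ∂μ :=
        (hmin.integral_eq_integral_Ioc_meas_le (.of_forall hmin0)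
          (.of_forall fun a => min_le_right _ _)).symm
    _ ≤ ∫ a, g a ∂μ := integral_mono hmin hg fun a => min_le_left _ _

variable {S : Type*} [PseudoMetricSpace S]

theorem thickening_setOf_le_subset_of_lipschitzWith {K : NNReal} {f : S → ℝ}
    (hf : LipschitzWith K f) (ε t : ℝ) :
    Metric.thickening ε {x | t ≤ f x} ⊆ {x | t ≤ f x + K * ε} := by
  intro x hx
  obtain ⟨z, hz, hxz⟩ := Metric.mem_thickening_iff.1 hx
  calc t ≤ f z := hz
    _ ≤ f x + K * dist z x := hf.le_add_mul z x
    _ ≤ f x + K * ε := by rw [dist_comm]; gcongr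

variable [MeasurableSpace S] [OpensMeasurableSpace S] {μ ν : Measure S} [IsFiniteMeasure μ]
  [IsFiniteMeasure ν] {K : NNReal} {f : S →ᵇ ℝ}

theorem integral_le_add_of_levyProkhorovEDist_lt (hf : LipschitzWith K f) (hf0 : 0 ≤ f) {ε : ℝ}
    (hε : 0 < ε) (h : levyProkhorovEDist μ ν < ENNReal.ofReal ε) :
    ∫ x, f x ∂μ ≤ ∫ x, f x ∂ν + (K * ν.real univ + ‖f‖) * ε := by
  have hfε : Integrable (fun x => f x + K * ε) ν := (f.integrable ν).add (integrable_const _)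
  have hlevel : IntegrableOn (fun t => ν.real {x | t ≤ f x + K * ε}) (Ioc 0 ‖f‖) := by
    have hanti : Antitone fun t => ν.real {x | t ≤ f x + K * ε} :=
      fun _ _ hst => measureReal_mono fun _ hx => hst.trans hx
    exact (hanti.intervalIntegrable (a := 0) (b := ‖f‖)).1
  calc ∫ x, f x ∂μ
      ≤ (∫ t in Ioc 0 ‖f‖, ν.real (Metric.thickening ε {x | t ≤ f x})) + ε * ‖f‖ :=
        f.integral_le_of_levyProkhorovEDist_lt μ ν hε h (.of_forall hf0)
    _ ≤ (∫ t in Ioc 0 ‖f‖, ν.real {x | t ≤ f x + K * ε}) + ε * ‖f‖ := by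
        gcongr ?_ + _
        exact integral_mono_of_nonneg (.of_forall fun _ => measureReal_nonneg) hlevel <|
          .of_forall fun t => measureReal_mono (thickening_setOf_le_subset_of_lipschitzWith hf ε t)
    _ ≤ ∫ x, (f x + K * ε) ∂ν + ε * ‖f‖ := by
        gcongr
        exact setIntegral_Ioc_measureReal_le_integral hfε
          (fun x => add_nonneg (hf0 x) (by positivity)) (norm_nonneg f)
    _ = ∫ x, f x ∂ν + (K * ν.real univ + ‖f‖) * ε := by
        rw [integral_add (f.integrable ν) (integrable_const _), integral_const, smul_eq_mul]
        ring

theorem integral_le_add_mul_levyProkhorovDist (hf : LipschitzWith K f) (hf0 : 0 ≤ f) :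
    ∫ x, f x ∂μ ≤ ∫ x, f x ∂ν + (K * ν.real univ + ‖f‖) * levyProkhorovDist μ ν := by
  have hlim : ContinuousWithinAt (fun ε => ∫ x, f x ∂ν + (K * ν.real univ + ‖f‖) * ε)
      (Ioi (levyProkhorovDist μ ν)) (levyProkhorovDist μ ν) := by fun_prop
  refine ge_of_tendsto hlim (eventually_mem_nhdsWithin.mono fun ε hε => ?_)
  exact integral_le_add_of_levyProkhorovEDist_lt hf hf0 (ENNReal.toReal_nonneg.trans_lt hε)
    ((ENNReal.lt_ofReal_iff_toReal_lt (levyProkhorovEDist_ne_top μ ν)).2 hε)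

end LevyProkhorov

section FortetMourier

/-- The test functions of the Fortet–Mourier distance: the index type of the supremum defining
`dFM`. -/
abbrev FMTestFun (S : Type*) [PseudoMetricSpace S] : Type _ :=
  {f : S → ℝ // LipschitzWith 1 f ∧ ∀ x, f x ∈ Icc (0 : ℝ) 1}

variable {S : Type*} [PseudoMetricSpace S]

instance FMTestFun.instNonempty : Nonempty (FMTestFun S) :=
  ⟨⟨fun _ => 0, LipschitzWith.const' 0, fun _ => by simp⟩⟩

/-- A Fortet–Mourier test function as a bounded continuous function, giving access to weak
convergence and to integrability against finite measures. -/
noncomputable def FMTestFun.toBCF (f : FMTestFun S) : S →ᵇ ℝ :=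
  ofNormedAddCommGroup f.1 f.2.1.continuous 1 fun x => abs_le.2
    ⟨by linarith [(f.2.2 x).1], (f.2.2 x).2⟩

theorem FMTestFun.norm_toBCF_le (f : FMTestFun S) : ‖f.toBCF‖ ≤ 1 :=
  norm_ofNormedAddCommGroup_le _ zero_le_one _

variable [MeasurableSpace S]

theorem dFM_nonneg (μ ν : Measure S) : 0 ≤ dFM μ ν :=
  Real.iSup_nonneg fun _ => abs_nonneg _

theorem FMTestFun.abs_integral_le (μ : Measure S) [IsFiniteMeasure μ] (f : FMTestFun S) :
    |∫ x, f.1 x ∂μ| ≤ μ.real univ :=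
  (norm_integral_le_of_norm_le_const <| .of_forall fun x =>
    (f.toBCF.norm_coe_le_norm x).trans f.norm_toBCF_le).trans_eq (one_mul _)

theorem bddAbove_range_abs_integral_sub (μ ν : Measure S) [IsFiniteMeasure μ] [IsFiniteMeasure ν] :
    BddAbove (range fun f : FMTestFun S => |∫ x, f.1 x ∂μ - ∫ x, f.1 x ∂ν|) := by
  refine ⟨μ.real univ + ν.real univ, ?_⟩
  rintro _ ⟨f, rfl⟩
  exact (abs_sub _ _).trans (add_le_add (f.abs_integral_le μ) (f.abs_integral_le ν))

variable [OpensMeasurableSpace S]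

theorem lowerSemicontinuous_dFM_left (ν : Measure S) [IsFiniteMeasure ν] :
    LowerSemicontinuous fun μ : FiniteMeasure S => dFM (μ : Measure S) ν := by
  refine lowerSemicontinuous_ciSup (fun μ => bddAbove_range_abs_integral_sub (μ : Measure S) ν)
    fun f : FMTestFun S => Continuous.lowerSemicontinuous ?_
  have hf : Continuous fun μ : FiniteMeasure S => ∫ x, f.1 x ∂(μ : Measure S) :=
    FiniteMeasure.continuous_integral_boundedContinuousFunction f.toBCF
  exact (hf.sub continuous_const).abs

theorem FMTestFun.integral_sub_le_mul_levyProkhorovDist (f : FMTestFun S) (μ ν : Measure S)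
    [IsFiniteMeasure μ] [IsFiniteMeasure ν] :
    ∫ x, f.1 x ∂μ - ∫ x, f.1 x ∂ν ≤ (ν.real univ + 1) * levyProkhorovDist μ ν := by
  have hLP : 0 ≤ levyProkhorovDist μ ν := ENNReal.toReal_nonneg
  have hf : ∫ x, f.1 x ∂μ ≤
      ∫ x, f.1 x ∂ν + ((1 : NNReal) * ν.real univ + ‖f.toBCF‖) * levyProkhorovDist μ ν :=
    integral_le_add_mul_levyProkhorovDist (f := f.toBCF) f.2.1 fun x => (f.2.2 x).1
  rw [sub_le_iff_le_add']
  grw [hf, f.norm_toBCF_le, NNReal.coe_one, one_mul]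

theorem dFM_le_mul_levyProkhorovDist (μ ν : Measure S) [IsFiniteMeasure μ] [IsFiniteMeasure ν] :
    dFM μ ν ≤ (max (μ.real univ) (ν.real univ) + 1) * levyProkhorovDist μ ν := by
  have hLP : 0 ≤ levyProkhorovDist μ ν := ENNReal.toReal_nonneg
  refine ciSup_le fun f : FMTestFun S => abs_sub_le_iff.2 ⟨?_, ?_⟩
  · grw [f.integral_sub_le_mul_levyProkhorovDist μ ν, ← le_max_right]
  · grw [f.integral_sub_le_mul_levyProkhorovDist ν μ, levyProkhorovDist_comm, ← le_max_left]

theorem tendsto_dFM_of_tendsto [SecondCountableTopology S] {ι : Type*} {l : Filter ι}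
    {μs : ι → ProbabilityMeasure S} {μ : ProbabilityMeasure S} (h : Tendsto μs l (𝓝 μ)) :
    Tendsto (fun i => dFM (μs i : Measure S) μ) l (𝓝 0) := by
  have hLP : Tendsto (fun i => levyProkhorovDist (μs i : Measure S) μ) l (𝓝 0) :=
    tendsto_iff_dist_tendsto_zero.1
      ((LevyProkhorov.continuous_ofMeasure_probabilityMeasure.tendsto μ).comp h)
  refine squeeze_zero (fun i => dFM_nonneg _ _) (fun i => dFM_le_mul_levyProkhorovDist _ _) ?_
  simpa using hLP.const_mul (1 + 1)

end FortetMourier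

section MarkovOperator

theorem integral_comp_measure {α β E : Type*} [MeasurableSpace α] [MeasurableSpace β]
    [NormedAddCommGroup E] [NormedSpace ℝ E] {κ : Kernel α β} {μ : Measure α} {f : β → E}
    (hf : Integrable f (κ ∘ₘ μ)) :
    ∫ y, f y ∂(κ ∘ₘ μ) = ∫ x, ∫ y, f y ∂κ x ∂μ := by
  rw [Measure.comp_eq_comp_const_apply] at hf ⊢
  rw [Kernel.integral_comp hf, Kernel.const_apply]

variable {S : Type*} [MeasurableSpace S]

/-- The Markov operator `P` of a Markov kernel, as a self-map of the space of probability measures,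
which carries the weak topology. -/
noncomputable def markovOperator (κ : Kernel S S) [IsMarkovKernel κ] (μ : ProbabilityMeasure S) :
    ProbabilityMeasure S :=
  ⟨κ ∘ₘ (μ : Measure S), inferInstance⟩

theorem coe_markovOperator_iterate (κ : Kernel S S) [IsMarkovKernel κ] (n : ℕ)
    (μ : ProbabilityMeasure S) :
    (((markovOperator κ)^[n] μ : ProbabilityMeasure S) : Measure S) = kIter κ n μ := by
  induction n with
  | zero => rfl
  | succ n ih =>
    rw [Function.iterate_succ_apply', kIter, ← ih]
    rfl

variable [TopologicalSpace S] [OpensMeasurableSpace S] {κ : Kernel S S} [IsMarkovKernel κ]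

theorem IsFeller.continuous_markovOperator (hκ : IsFeller κ) : Continuous (markovOperator κ) := by
  refine ProbabilityMeasure.continuous_iff_forall_continuous_integral.2 fun f => ?_
  have hUf_le (x : S) : ‖∫ y, f y ∂κ x‖ ≤ ‖f‖ := f.norm_integral_le_norm (κ x)
  let Uf : S →ᵇ ℝ := ofNormedAddCommGroup (fun x => ∫ y, f y ∂κ x)
    (hκ f f.continuous ⟨‖f‖, f.norm_coe_le_norm⟩) ‖f‖ hUf_le
  have hduality (μ : ProbabilityMeasure S) :
      ∫ y, f y ∂(markovOperator κ μ : Measure S) = ∫ x, Uf x ∂(μ : Measure S) :=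
    integral_comp_measure (f.integrable (κ ∘ₘ (μ : Measure S)))
  simpa only [hduality] using
    ProbabilityMeasure.continuous_integral_boundedContinuousFunction Uf

theorem IsAsympStable.tendsto_markovOperator_iterate {μst : Measure S}
    (hstab : IsAsympStable κ μst) (μ : ProbabilityMeasure S) :
    Tendsto (fun n => (markovOperator κ)^[n] μ) atTop (𝓝 ⟨μst, hstab.1⟩) := by
  refine ProbabilityMeasure.tendsto_iff_forall_integral_tendsto.2 fun f => ?_
  simp only [coe_markovOperator_iterate]
  exact hstab.2.2 μ inferInstance f f.continuous ⟨‖f‖, f.norm_coe_le_norm⟩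

end MarkovOperator

section Ok

variable {S : Type*} [MetricSpace S] [MeasurableSpace S]

theorem Ok_eq_iUnion_interior (κ : Kernel S S) (μst : Measure S) (k : ℕ) :
    Ok κ μst k =
      ⋃ N, interior (⋂ n ≥ N, {y | dFM (kIter κ n (Measure.dirac y)) μst ≤ 1 / (k : ℝ)}) := by
  ext x
  simp only [Ok, mem_ofPred_eq, mem_iUnion, mem_interior, subset_iInter_iff]
  constructor
  · rintro ⟨O, hO, hxO, N, hN⟩
    exact ⟨N, O, hN, hO, hxO⟩
  · rintro ⟨N, O, hN, hO, hxO⟩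
    exact ⟨O, hO, hxO, N, hN⟩

variable [OpensMeasurableSpace S] {κ : Kernel S S} [IsMarkovKernel κ]

theorem IsFeller.isClosed_setOf_dFM_le (hκ : IsFeller κ) (ν : Measure S) [IsFiniteMeasure ν]
    (n : ℕ) (c : ℝ) : IsClosed {y | dFM (kIter κ n (Measure.dirac y)) ν ≤ c} := by
  have hcont : Continuous fun y => ((markovOperator κ)^[n] (diracProba y)).toFiniteMeasure :=
    ProbabilityMeasure.toFiniteMeasure_continuous.comp
      ((hκ.continuous_markovOperator.iterate n).comp continuous_diracProba)
  have hclosed : IsClosed {y | dFM ((markovOperator κ)^[n] (diracProba y) : Measure S) ν ≤ c} :=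
    ((lowerSemicontinuous_dFM_left ν).isClosed_preimage c).preimage hcont
  simp only [coe_markovOperator_iterate] at hclosed
  exact hclosed

theorem IsAsympStable.tendsto_dFM_kIter_dirac [SecondCountableTopology S] {μst : Measure S}
    (hstab : IsAsympStable κ μst) (y : S) :
    Tendsto (fun n => dFM (kIter κ n (Measure.dirac y)) μst) atTop (𝓝 0) := by
  have h := tendsto_dFM_of_tendsto (hstab.tendsto_markovOperator_iterate (diracProba y))
  simp only [coe_markovOperator_iterate] at h
  exact h

end Ok

theorem Ok_isOpen_dense_general
    {S : Type*} [MetricSpace S] [BaireSpace S] [SecondCountableTopology S]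
    [MeasurableSpace S] [OpensMeasurableSpace S]
    (κ : Kernel S S) [IsMarkovKernel κ]
    (hFeller : IsFeller κ) (μst : Measure S) (hstab : IsAsympStable κ μst) :
    ∀ k : ℕ, 1 ≤ k → IsOpen (Ok κ μst k) ∧ Dense (Ok κ μst k) := by
  intro k hk
  have := hstab.1
  have hk0 : (0 : ℝ) < 1 / k := one_div_pos.2 (by exact_mod_cast hk)
  rw [Ok_eq_iUnion_interior]
  exact ⟨isOpen_iUnion fun N => isOpen_interior,
    dense_iUnion_interior_biInter_of_eventually_mem
      (fun n => hFeller.isClosed_setOf_dFM_le μst n (1 / k))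
      (fun y => (hstab.tendsto_dFM_kIter_dirac y).eventually_le_const hk0)⟩

/-- For an asymptotically stable Markov–Feller operator on a Polish metric space, each set
`O_k` (for `k ≥ 1`) is open and dense. -/
theorem Ok_isOpen_dense
    {S : Type*} [MetricSpace S] [CompleteSpace S] [SecondCountableTopology S]
    [MeasurableSpace S] [BorelSpace S]
    (κ : ProbabilityTheory.Kernel S S) [IsMarkovKernel κ]
    (hFeller : IsFeller κ) (μst : Measure S) (hstab : IsAsympStable κ μst) :
    ∀ k : ℕ, 1 ≤ k → IsOpen (Ok κ μst k) ∧ Dense (Ok κ μst k) := by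
  exact Ok_isOpen_dense_general κ hFeller μst hstab
end

section
/- Let S be the circle ℝ/ℤ (equivalently the unit circle in ℝ², with points identified with their representatives x ∈ [0,1)), and let P be the Markov operator generated by the transition probability function π(y,·) = δ_{2y} for y ∈ [0,1/2) and π(y,·) = (1/2)δ_0 + (1/2)δ_{2y−1} for y ∈ [1/2,1). Then P is a Markov-Feller operator (its dual U maps bounded continuous functions on S to bounded continuous functions), δ_0 is an invariant measure of P, and P is asymptotically stable: for every Borel probability measure μ on S, Pⁿμ converges weakly to δ_0 as n → ∞. -/
open MeasureTheory Filter Topology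

/-- The representative in `[0,1)` of a point of the circle `ℝ/ℤ`. -/
noncomputable def circleRep (x : UnitAddCircle) : ℝ :=
  ((AddCircle.equivIco (1 : ℝ) 0) x : ℝ)

/-- The transition probability function `π(y,·) = δ_{2y}` for `y ∈ [0,1/2)` and
`π(y,·) = (1/2)δ₀ + (1/2)δ_{2y−1}` for `y ∈ [1/2,1)` (arithmetic modulo 1, so that
`δ_{2y−1} = δ_{2y}` on the circle). -/
noncomputable def circleKer (y : UnitAddCircle) : Measure UnitAddCircle :=
  if circleRep y < 1 / 2 then Measure.dirac (y + y)
  else (1 / 2 : ENNReal) • Measure.dirac (0 : UnitAddCircle) +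
    (1 / 2 : ENNReal) • Measure.dirac (y + y)

/-- The `n`-step evolution of a measure under the Markov operator generated by
`circleKer`. -/
noncomputable def circleP : ℕ → Measure UnitAddCircle → Measure UnitAddCircle
  | 0, μ => μ
  | n + 1, μ => (circleP n μ).bind circleKer

/-- The `n`-th iterate of the dual operator: `Uⁿf(x) = ∫ f d(Pⁿδₓ)`. -/
noncomputable def circleU (n : ℕ) (f : UnitAddCircle → ℝ) (x : UnitAddCircle) : ℝ :=
  ∫ y, f y ∂(circleP n (Measure.dirac x))

/-- The `i`-th binary digit `e_{i+1}(x)` of a real number `x ∈ [0,1)` (the expansion with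
infinitely many digits equal to `0`). -/
noncomputable def binDigit (x : ℝ) (i : ℕ) : ℕ := (⌊x * 2 ^ (i + 1)⌋).toNat % 2

/-!
A chain that moves from `x` to `T x` with probability `w x` and is otherwise reset to a fixed point
`p` of `T` has `n`-step transitions of the same form: it is at `T^[n] x` with probability
`∏ i < n, w (T^[i] x)` and at `p` otherwise. Hence it converges to `p` from every `x` whose orbit
reaches `p` or along which the product tends to `0`.

On the circle, `T` is the doubling map and `p = 0`. An orbit that eventually stays in `[0, 1/2)` has
reached `0`, since doubling there multiplies the representative by `2`; any other orbit visits
`[1/2, 1)` infinitely often, and each visit halves the product. The weight jumps only at `0` and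
`1/2`, which are both mapped to `0`, so the Feller property survives.
-/

open ProbabilityTheory unitInterval

lemma tendsto_prod_range_zero_of_frequently_le {a : ℕ → I} {c : I} (hc : c < 1)
    (ha : ∃ᶠ n in atTop, a n ≤ c) :
    Tendsto (fun n => ∏ i ∈ Finset.range n, a i) atTop (𝓝 0) := by
  have hanti : Antitone fun n => ∏ i ∈ Finset.range n, a i := antitone_nat_of_succ_le fun n => by
    rw [Finset.prod_range_succ]
    exact unitInterval.mul_le_left
  have hlim := tendsto_atTop_iInf hanti
  set L := ⨅ n, ∏ i ∈ Finset.range n, a i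
  have hL : L ≤ L * c := by
    refine le_of_tendsto_of_tendsto_of_frequently ((tendsto_add_atTop_iff_nat 1).2 hlim)
      (hlim.mul_const c) (ha.mono fun n hn => ?_)
    rw [Finset.prod_range_succ]
    gcongr
  have hL' : (L : ℝ) ≤ L * c := hL
  have hc' : (c : ℝ) < 1 := hc
  have hL0 : L = 0 := le_antisymm (show (L : ℝ) ≤ 0 by nlinarith) unitInterval.nonneg'
  rwa [hL0] at hlim

section ResetKernel

variable {X : Type*} [MeasurableSpace X] {T : X → X} {w : X → I} {p : X}

/-- The transition kernel of the chain that moves from `x` to `T x` with probability `w x` and is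
reset to `p` otherwise. -/
noncomputable def resetKernel (hT : Measurable T) (hw : Measurable w) (p : X) : Kernel X X where
  toFun x := toNNReal (w x) • Measure.dirac (T x) + toNNReal (σ (w x)) • Measure.dirac p
  measurable' := by
    refine Measure.measurable_of_measurable_coe _ fun s hs => ?_
    have hdirac : Measurable fun x => Measure.dirac (T x) s :=
      (Measure.measurable_coe hs).comp (Measure.measurable_dirac.comp hT)
    simp only [Measure.add_apply, Measure.smul_apply, ENNReal.smul_def, smul_eq_mul]
    fun_prop

lemma resetKernel_apply (hT : Measurable T) (hw : Measurable w) (p x : X) :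
    resetKernel hT hw p x =
      toNNReal (w x) • Measure.dirac (T x) + toNNReal (σ (w x)) • Measure.dirac p :=
  rfl

instance isMarkovKernel_resetKernel (hT : Measurable T) (hw : Measurable w) :
    IsMarkovKernel (resetKernel hT hw p) where
  isProbabilityMeasure x := ⟨by simp [resetKernel_apply, -Measure.coe_nnreal_smul]⟩

lemma integral_resetKernel (hT : Measurable T) (hw : Measurable w) {f : X → ℝ}
    (hf : Measurable f) (x : X) :
    ∫ y, f y ∂(resetKernel hT hw p x) = f p + w x * (f (T x) - f p) := by
  have hint (y : X) : Integrable f (Measure.dirac y) :=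
    integrable_dirac' hf.stronglyMeasurable (by simp)
  rw [resetKernel_apply, integral_add_measure (hint _).smul_measure_nnreal
    (hint _).smul_measure_nnreal, integral_smul_nnreal_measure, integral_smul_nnreal_measure,
    integral_dirac' _ _ hf.stronglyMeasurable, integral_dirac' _ _ hf.stronglyMeasurable]
  simp only [NNReal.smul_def, coe_toNNReal, coe_symm_eq, smul_eq_mul]
  ring

lemma resetKernel_apply_self (hT : Measurable T) (hw : Measurable w) (hp : T p = p) :
    resetKernel hT hw p p = Measure.dirac p := by
  rw [resetKernel_apply, hp, ← add_smul, toNNReal_add_toNNReal_symm, one_smul]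

lemma invariant_dirac_resetKernel (hT : Measurable T) (hw : Measurable w) (hp : T p = p) :
    (resetKernel hT hw p).Invariant (Measure.dirac p) := by
  rw [Kernel.Invariant, Measure.dirac_bind (Kernel.measurable _), resetKernel_apply_self hT hw hp]

lemma continuous_integral_resetKernel [TopologicalSpace X] [BorelSpace X]
    (hT : Continuous T) (hw : Measurable w) (hwc : ∀ x, T x ≠ p → ContinuousAt w x)
    {f : X → ℝ} (hf : Continuous f) :
    Continuous fun x => ∫ y, f y ∂(resetKernel hT.measurable hw p x) := by
  simp only [integral_resetKernel hT.measurable hw hf.measurable]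
  refine continuous_const.add (continuous_iff_continuousAt.2 fun x => ?_)
  have hg : ContinuousAt (fun y => f (T y) - f p) x := by fun_prop
  -- At points with `T x = p` the factor `f (T y) - f p` tends to `0`, which absorbs jumps of `w`.
  by_cases hx : T x = p
  · have hlim : Tendsto (fun y => f (T y) - f p) (𝓝 x) (𝓝 0) := by simpa [hx] using hg.tendsto
    have hbdd (y : X) : |(w y : ℝ)| ≤ 1 := abs_le.2 ⟨by linarith [(w y).2.1], (w y).2.2⟩
    simpa [ContinuousAt, hx] using bdd_le_mul_tendsto_zero' 1 (.of_forall hbdd) hlim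
  · exact (continuous_subtype_val.continuousAt.comp (hwc x hx)).mul hg

lemma resetKernel_comp_resetKernel {S : X → X} {v : X → I} (hT : Measurable T)
    (hw : Measurable w) (hS : Measurable S) (hv : Measurable v) (hp : T p = p) :
    resetKernel hT hw p ∘ₖ resetKernel hS hv p =
      resetKernel (hT.comp hS) (hv.mul (hw.comp hS)) p := by
  ext1 x
  have hcoeff : toNNReal (σ (v x * w (S x))) =
      toNNReal (v x) * toNNReal (σ (w (S x))) + toNNReal (σ (v x)) := by
    ext
    simp only [coe_toNNReal, coe_symm_eq, Set.Icc.coe_mul, NNReal.coe_add, NNReal.coe_mul]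
    ring
  have hmul : toNNReal (v x * w (S x)) = toNNReal (v x) * toNNReal (w (S x)) := rfl
  rw [Kernel.comp_apply, resetKernel_apply hS, Measure.comp_add, Measure.bind_smul,
    Measure.bind_smul, Measure.dirac_bind (Kernel.measurable _),
    Measure.dirac_bind (Kernel.measurable _), resetKernel_apply_self hT hw hp]
  simp only [resetKernel_apply, Pi.mul_apply, Function.comp_apply, hcoeff, hmul]
  module

/-- The probability that the chain with transition kernel `resetKernel` started at `x` follows `T`
for `n` steps without being reset. -/
def survivalProb (T : X → X) (w : X → I) (n : ℕ) (x : X) : I :=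
  ∏ i ∈ Finset.range n, w (T^[i] x)

lemma measurable_survivalProb (hT : Measurable T) (hw : Measurable w) (n : ℕ) :
    Measurable (survivalProb T w n) :=
  Finset.measurable_fun_prod _ fun i _ => hw.comp (hT.iterate i)

lemma resetKernel_pow (hT : Measurable T) (hw : Measurable w) (hp : T p = p) (n : ℕ) :
    resetKernel hT hw p ^ n =
      resetKernel (hT.iterate n) (measurable_survivalProb hT hw n) p := by
  induction n with
  | zero =>
    ext1 x
    rw [pow_zero, show (1 : Kernel X X) = Kernel.id from rfl, Kernel.id_apply]
    simp [resetKernel_apply, survivalProb]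
  | succ n ih =>
    have hsurv : survivalProb T w (n + 1) = survivalProb T w n * (w ∘ T^[n]) :=
      funext fun _ => Finset.prod_range_succ _ _
    rw [pow_succ', ih]
    simp only [hsurv, Function.iterate_succ' T n]
    exact resetKernel_comp_resetKernel hT hw _ _ hp

lemma tendsto_integral_resetKernel_pow (hT : Measurable T) (hw : Measurable w) (hp : T p = p)
    {x : X} (hx : (∃ n, T^[n] x = p) ∨ Tendsto (survivalProb T w · x) atTop (𝓝 0))
    {f : X → ℝ} (hf : Measurable f) {C : ℝ} (hC : ∀ y, |f y| ≤ C) :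
    Tendsto (fun n => ∫ y, f y ∂((resetKernel hT hw p ^ n) x)) atTop (𝓝 (f p)) := by
  simp only [resetKernel_pow hT hw hp, integral_resetKernel _ _ hf]
  suffices Tendsto (fun n => survivalProb T w n x * (f (T^[n] x) - f p)) atTop (𝓝 0) by
    simpa using this.const_add (f p)
  rcases hx with ⟨N, hN⟩ | hsurv
  · refine tendsto_const_nhds.congr' ?_
    filter_upwards [eventually_ge_atTop N] with n hn
    rw [← Nat.sub_add_cancel hn, Function.iterate_add_apply, hN, Function.iterate_fixed hp,
      sub_self, mul_zero]
  · have hsurv' := (continuous_subtype_val.tendsto (0 : I)).comp hsurv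
    have hbdd (n : ℕ) : ‖f (T^[n] x) - f p‖ ≤ C + C :=
      (norm_sub_le _ _).trans (add_le_add (hC _) (hC _))
    exact hsurv'.zero_mul_isBoundedUnder_le (isBoundedUnder_of ⟨C + C, hbdd⟩)

lemma tendsto_integral_resetKernel_pow_comp (hT : Measurable T) (hw : Measurable w) (hp : T p = p)
    {μ : Measure X} [IsFiniteMeasure μ]
    (hμ : ∀ᵐ x ∂μ, (∃ n, T^[n] x = p) ∨ Tendsto (survivalProb T w · x) atTop (𝓝 0))
    {f : X → ℝ} (hf : Measurable f) {C : ℝ} (hC : ∀ y, |f y| ≤ C) :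
    Tendsto (fun n : ℕ => ∫ y, f y ∂((resetKernel hT hw p ^ n) ∘ₘ μ)) atTop
      (𝓝 (μ.real Set.univ * f p)) := by
  set κ := resetKernel hT hw p
  have (n : ℕ) : IsMarkovKernel (κ ^ n) := by
    rw [resetKernel_pow hT hw hp]
    infer_instance
  have hint (n : ℕ) : ∫ y, f y ∂((κ ^ n) ∘ₘ μ) = ∫ x, ∫ y, f y ∂((κ ^ n) x) ∂μ :=
    Kernel.integral_comp (κ := Kernel.const Unit μ) (a := ())
      (.of_bound hf.aestronglyMeasurable C (ae_of_all _ hC))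
  have hbound (n : ℕ) (x : X) : ‖∫ y, f y ∂((κ ^ n) x)‖ ≤ C := by
    simpa using norm_integral_le_of_norm_le_const (μ := (κ ^ n) x) (f := f) (ae_of_all _ hC)
  rw [← smul_eq_mul, ← integral_const]
  simp only [hint]
  exact tendsto_integral_of_dominated_convergence (fun _ => C)
    (fun n => hf.stronglyMeasurable.integral_kernel.aestronglyMeasurable) (integrable_const C)
    (fun n => ae_of_all _ (hbound n))
    (hμ.mono fun x hx => tendsto_integral_resetKernel_pow hT hw hp hx hf hC)

end ResetKernel

lemma circleRep_mem_Ico (x : UnitAddCircle) : circleRep x ∈ Set.Ico (0 : ℝ) 1 := by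
  simpa [circleRep] using (AddCircle.equivIco (1 : ℝ) 0 x).2

lemma coe_circleRep (x : UnitAddCircle) : (circleRep x : UnitAddCircle) = x :=
  AddCircle.coe_equivIco

lemma circleRep_coe {r : ℝ} (hr : r ∈ Set.Ico (0 : ℝ) 1) : circleRep r = r :=
  AddCircle.equivIco_coe_of_mem (by simpa using hr)

lemma measurable_circleRep : Measurable circleRep :=
  measurable_subtype_coe.comp (AddCircle.measurableEquivIco (1 : ℝ) 0).measurable

lemma continuousAt_circleRep {x : UnitAddCircle} (hx : x ≠ 0) : ContinuousAt circleRep x :=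
  continuous_subtype_val.continuousAt.comp
    (AddCircle.continuousAt_equivIco (1 : ℝ) 0 (by simpa using hx))

/-- The doubling map `x ↦ 2x` of the circle, the deterministic part of `circleKer`. -/
def circleDouble (x : UnitAddCircle) : UnitAddCircle :=
  x + x

lemma circleDouble_zero : circleDouble 0 = 0 :=
  add_zero 0

lemma continuous_circleDouble : Continuous circleDouble :=
  continuous_id.add continuous_id

lemma circleRep_circleDouble {x : UnitAddCircle} (hx : circleRep x < 1 / 2) :
    circleRep (circleDouble x) = 2 * circleRep x := by
  have hrep := circleRep_mem_Ico x
  rw [← circleRep_coe (r := 2 * circleRep x) ⟨by linarith [hrep.1], by linarith⟩, two_mul,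
    AddCircle.coe_add, coe_circleRep, circleDouble]

lemma circleDouble_eq_zero_of_circleRep_eq_half {x : UnitAddCircle} (hx : circleRep x = 1 / 2) :
    circleDouble x = 0 := by
  rw [circleDouble, ← coe_circleRep x, ← AddCircle.coe_add, hx, add_halves]
  exact AddCircle.coe_period 1

lemma eq_zero_of_forall_circleRep_iterate_lt_half {x : UnitAddCircle}
    (hx : ∀ n, circleRep (circleDouble^[n] x) < 1 / 2) : x = 0 := by
  have hpow (n : ℕ) : circleRep (circleDouble^[n] x) = 2 ^ n * circleRep x := by
    induction n with
    | zero => simp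
    | succ n ih => rw [Function.iterate_succ_apply', circleRep_circleDouble (hx n), ih]; ring
  have hrep : circleRep x = 0 := by
    by_contra hne
    have hpos : 0 < circleRep x := (circleRep_mem_Ico x).1.lt_of_ne' hne
    obtain ⟨n, hn⟩ := pow_unbounded_of_one_lt (1 / circleRep x) (one_lt_two (α := ℝ))
    rw [div_lt_iff₀ hpos] at hn
    linarith [hx n, hpow n]
  rw [← coe_circleRep x, hrep, AddCircle.coe_zero]

lemma exists_iterate_circleDouble_eq_zero_or_frequently_half_le_circleRep (x : UnitAddCircle) :
    (∃ n, circleDouble^[n] x = 0) ∨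
      ∃ᶠ n in atTop, 1 / 2 ≤ circleRep (circleDouble^[n] x) := by
  refine or_iff_not_imp_right.2 fun h => ?_
  simp only [not_frequently, not_le, eventually_atTop] at h
  obtain ⟨N, hN⟩ := h
  refine ⟨N, eq_zero_of_forall_circleRep_iterate_lt_half fun n => ?_⟩
  rw [← Function.iterate_add_apply]
  exact hN _ (Nat.le_add_left N n)

/-- The probability `1 / 2`, as a point of the unit interval. -/
noncomputable def halfProb : I :=
  ⟨1 / 2, by norm_num, by norm_num⟩

/-- The probability `1` on `[0,1/2)` and `1/2` on `[1/2,1)` with which `circleKer` follows the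
doubling map. -/
noncomputable def circleWeight (x : UnitAddCircle) : I :=
  if circleRep x < 1 / 2 then 1 else halfProb

lemma measurable_circleWeight : Measurable circleWeight :=
  Measurable.ite (measurableSet_lt measurable_circleRep measurable_const)
    measurable_const measurable_const

lemma continuousAt_circleWeight {x : UnitAddCircle} (hx : circleDouble x ≠ 0) :
    ContinuousAt circleWeight x := by
  have hrep : ContinuousAt circleRep x :=
    continuousAt_circleRep fun h => hx (by rw [h, circleDouble_zero])
  rcases lt_trichotomy (circleRep x) (1 / 2) with hlt | heq | hgt
  · refine continuousAt_const.congr (f := fun _ => 1) ?_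
    filter_upwards [hrep.eventually_lt_const hlt] with y hy
    exact (if_pos hy).symm
  · exact absurd (circleDouble_eq_zero_of_circleRep_eq_half heq) hx
  · refine continuousAt_const.congr (f := fun _ => halfProb) ?_
    filter_upwards [hrep.eventually_const_lt hgt] with y hy
    exact (if_neg hy.not_gt).symm

lemma tendsto_survivalProb_circleDouble {x : UnitAddCircle}
    (hx : ∃ᶠ n in atTop, 1 / 2 ≤ circleRep (circleDouble^[n] x)) :
    Tendsto (survivalProb circleDouble circleWeight · x) atTop (𝓝 0) := by
  have hhalf : halfProb < 1 := Subtype.coe_lt_coe.1 (by norm_num [halfProb])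
  exact tendsto_prod_range_zero_of_frequently_le hhalf (hx.mono fun n hn => (if_neg hn.not_gt).le)

lemma circleKer_eq_resetKernel :
    circleKer = resetKernel continuous_circleDouble.measurable measurable_circleWeight 0 := by
  ext1 x
  rw [resetKernel_apply, circleKer, circleWeight]
  split_ifs
  · simp [circleDouble]
  · have hhalf : (toNNReal halfProb : ENNReal) = 1 / 2 := by
      have hnn : toNNReal halfProb = 1 / 2 := by ext; simp [halfProb]
      simp [hnn]
    have hsymm : σ halfProb = halfProb := Subtype.ext (by norm_num [halfProb])
    rw [hsymm, add_comm, circleDouble, ← hhalf]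
    rfl

lemma circleP_eq_resetKernel_pow_comp (n : ℕ) (μ : Measure UnitAddCircle) :
    circleP n μ =
      (resetKernel continuous_circleDouble.measurable measurable_circleWeight 0 ^ n) ∘ₘ μ := by
  induction n with
  | zero => exact Measure.id_comp.symm
  | succ n ih => rw [circleP, ih, circleKer_eq_resetKernel, Measure.comp_assoc, pow_succ']; rfl

theorem circle_markov_feller_asympStable_general :
    (∀ f : UnitAddCircle → ℝ, Continuous f → Continuous (fun x => ∫ y, f y ∂(circleKer x))) ∧
    (Measure.dirac (0 : UnitAddCircle)).bind circleKer = Measure.dirac (0 : UnitAddCircle) ∧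
    (∀ μ : Measure UnitAddCircle, IsProbabilityMeasure μ →
      ∀ f : UnitAddCircle → ℝ, Measurable f → (∃ C : ℝ, ∀ x, |f x| ≤ C) →
        Tendsto (fun n => ∫ x, f x ∂(circleP n μ)) atTop
          (𝓝 (∫ x, f x ∂(Measure.dirac (0 : UnitAddCircle))))) := by
  refine ⟨fun f hf => ?_, ?_, fun μ _ f hf ⟨C, hC⟩ => ?_⟩
  · rw [circleKer_eq_resetKernel]
    exact continuous_integral_resetKernel continuous_circleDouble _
      (fun _ => continuousAt_circleWeight) hf
  · rw [circleKer_eq_resetKernel]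
    exact invariant_dirac_resetKernel _ _ circleDouble_zero
  · have hreset (x : UnitAddCircle) : (∃ n, circleDouble^[n] x = 0) ∨
        Tendsto (survivalProb circleDouble circleWeight · x) atTop (𝓝 0) :=
      (exists_iterate_circleDouble_eq_zero_or_frequently_half_le_circleRep x).imp_right
        tendsto_survivalProb_circleDouble
    simpa [circleP_eq_resetKernel_pow_comp] using
      tendsto_integral_resetKernel_pow_comp _ _ circleDouble_zero (ae_of_all μ hreset) hf hC

/-- The Markov operator on the circle `ℝ/ℤ` generated by `π(y,·) = δ_{2y}` for
`y ∈ [0,1/2)`, `π(y,·) = (1/2)δ₀ + (1/2)δ_{2y−1}` for `y ∈ [1/2,1)`, is Feller, has `δ₀` as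
an invariant measure, and is asymptotically stable: `Pⁿμ → δ₀` weakly for every Borel
probability measure `μ`. -/
theorem circle_markov_feller_asympStable :
    (∀ f : UnitAddCircle → ℝ, Continuous f → (∃ C : ℝ, ∀ x, |f x| ≤ C) →
      Continuous (fun x => ∫ y, f y ∂(circleKer x))) ∧
    (Measure.dirac (0 : UnitAddCircle)).bind circleKer = Measure.dirac (0 : UnitAddCircle) ∧
    (∀ μ : Measure UnitAddCircle, IsProbabilityMeasure μ →
      ∀ f : UnitAddCircle → ℝ, Continuous f → (∃ C : ℝ, ∀ x, |f x| ≤ C) →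
        Tendsto (fun n => ∫ x, f x ∂(circleP n μ)) atTop
          (𝓝 (∫ x, f x ∂(Measure.dirac (0 : UnitAddCircle))))) :=
  let ⟨feller, invariant, stable⟩ := circle_markov_feller_asympStable_general
  ⟨fun f hf _ => feller f hf, invariant, fun μ hμ f hf hC => stable μ hμ f hf.measurable hC⟩
end
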